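/- More generally, for a 2-form Ω = Σ_{i<j} c_{ij} ωᵢ∧ωⱼ on K^m, the k-fold wedge power satisfies Ω^{∧k} = k!·Σ_{i₁<...<i_{2k}} Pf(C(i₁,...,i_{2k}))·ω_{i₁}∧...∧ω_{i_{2k}}, where C(i₁,...,i_{2k}) is the principal submatrix of the skew matrix C on rows and columns i₁,...,i_{2k}. -/

import Mathlib

open Matrix

/-- The even index `2i` in `Fin (2*n)`. -/
def evenIdx {n : ℕ} (i : Fin n) : Fin (2 * n) := ⟨2 * i.val, by have := i.isLt; omega⟩

/-- The odd index `2i+1` in `Fin (2*n)`. -/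
def oddIdx {n : ℕ} (i : Fin n) : Fin (2 * n) := ⟨2 * i.val + 1, by have := i.isLt; omega⟩

/-- The Pfaffian of a `2n × 2n` matrix over a commutative ring, defined as the signed sum
over perfect matchings of `{0, …, 2n-1}` of the products of the corresponding entries. -/
def pfaffian {R : Type*} [CommRing R] {n : ℕ} (A : Matrix (Fin (2 * n)) (Fin (2 * n)) R) : R :=
  ∑ σ ∈ Finset.univ.filter (fun σ : Equiv.Perm (Fin (2 * n)) =>
      (∀ i : Fin n, σ (evenIdx i) < σ (oddIdx i)) ∧
      ∀ i j : Fin n, i < j → σ (evenIdx i) < σ (evenIdx j)),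
    (Equiv.Perm.sign σ : ℤ) • ∏ i : Fin n, A (σ (evenIdx i)) (σ (oddIdx i))

/-!
Expand `Ω ^ k` as a sum over all tuples `g : Fin (2 * k) → κ`. Alternation kills the tuples that
are not injective, and every injective tuple is `f ∘ σ` for a unique strictly increasing `f` and a
unique permutation `σ`. The coefficient of `ω_{f 0} ∧ ⋯ ∧ ω_{f (2k-1)}` is therefore a signed sum
over all `σ` with `σ (2i) < σ (2i+1)` for every `i`. Permuting the blocks `{2i, 2i+1}` is an even
permutation that leaves the product unchanged, while the Pfaffian keeps only the arrangement of the
blocks with `σ (2i)` increasing, so the coefficient is `k!` times the Pfaffian.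
-/

open scoped Classical in
theorem card_perm_strictMono_comp {n : ℕ} {α : Type*} [LinearOrder α] {a : Fin n → α}
    (ha : Function.Injective a) :
    (Finset.univ.filter fun τ : Equiv.Perm (Fin n) => StrictMono (a ∘ τ)).card = 1 := by
  have hsort : StrictMono (a ∘ Tuple.sort a) :=
    (Tuple.monotone_sort a).strictMono_of_injective (ha.comp (Tuple.sort a).injective)
  refine Finset.card_eq_one.2 ⟨Tuple.sort a, Finset.ext fun τ => ?_⟩
  rw [Finset.mem_filter_univ, Finset.mem_singleton]
  refine ⟨fun hτ => Equiv.ext fun i => ha ?_, fun h => h ▸ hsort⟩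
  exact congrFun (Tuple.unique_monotone hτ.monotone hsort.monotone) i

-- If `a x` is injective, then `x = e τ y` for a unique `τ` and a unique `y` with `a y` increasing.
open scoped Classical in
theorem sum_eq_sum_strictMono_sum_perm {n : ℕ} {X α M : Type*} [Fintype X] [LinearOrder α]
    [AddCommMonoid M] (a : X → Fin n → α) (e : Equiv.Perm (Fin n) → Equiv.Perm X)
    (he : ∀ τ x, a (e τ x) = a x ∘ τ) (F : X → M)
    (hF : ∀ x, ¬ Function.Injective (a x) → F x = 0) :
    ∑ x, F x = ∑ x with StrictMono (a x), ∑ τ, F (e τ x) := by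
  have hsort (x : X) : F x = ∑ τ : Equiv.Perm (Fin n), if StrictMono (a x ∘ τ) then F x else 0 := by
    by_cases hx : Function.Injective (a x)
    · rw [← Finset.sum_filter, Finset.sum_const, card_perm_strictMono_comp hx, one_smul]
    · simp only [hF x hx, ite_self, Finset.sum_const_zero]
  have hcancel (τ : Equiv.Perm (Fin n)) (x : X) : a (e τ x) ∘ ⇑τ⁻¹ = a x := by
    ext i
    simp only [he, Function.comp_apply, Equiv.Perm.inv_def, Equiv.apply_symm_apply]
  calc ∑ x, F x
      = ∑ x, ∑ τ : Equiv.Perm (Fin n), if StrictMono (a x ∘ τ) then F x else 0 :=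
        Finset.sum_congr rfl fun x _ => hsort x
    _ = ∑ τ : Equiv.Perm (Fin n), ∑ x, if StrictMono (a x ∘ τ) then F x else 0 :=
        Finset.sum_comm
    _ = ∑ τ : Equiv.Perm (Fin n), ∑ x, if StrictMono (a x ∘ ⇑τ⁻¹) then F x else 0 :=
        (Equiv.sum_comp (Equiv.inv (Equiv.Perm (Fin n))) _).symm
    _ = ∑ τ, ∑ x, if StrictMono (a x) then F (e τ x) else 0 :=
        Finset.sum_congr rfl fun τ _ => by
          rw [← Equiv.sum_comp (e τ)]
          simp only [hcancel]
    _ = ∑ x with StrictMono (a x), ∑ τ, F (e τ x) := by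
        rw [Finset.sum_comm, Finset.sum_filter]
        exact Finset.sum_congr rfl fun x _ => by split_ifs <;> simp

open scoped Classical in
theorem sum_smul_alternatingMap_comp {n : ℕ} {R M N κ : Type*} [CommRing R] [AddCommGroup M]
    [Module R M] [AddCommGroup N] [Module R N] [Fintype κ] [LinearOrder κ]
    (φ : M [⋀^Fin n]→ₗ[R] N) (v : κ → M) (c : (Fin n → κ) → R) :
    ∑ g, c g • φ (v ∘ g) = ∑ f : Fin n → κ with StrictMono f,
      (∑ σ : Equiv.Perm (Fin n), Equiv.Perm.sign σ • c (f ∘ σ)) • φ (v ∘ f) := by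
  rw [sum_eq_sum_strictMono_sum_perm id (fun σ => Equiv.arrowCongr σ⁻¹ (Equiv.refl κ))
    (fun _ _ => rfl) (fun g => c g • φ (v ∘ g))]
  · refine Finset.sum_congr rfl fun f _ => ?_
    rw [Finset.sum_smul]
    refine Finset.sum_congr rfl fun σ _ => ?_
    calc c (f ∘ σ) • φ ((v ∘ f) ∘ σ)
        = c (f ∘ σ) • Equiv.Perm.sign σ • φ (v ∘ f) := by rw [φ.map_perm]
      _ = (Equiv.Perm.sign σ • c (f ∘ σ)) • φ (v ∘ f) := by rw [smul_comm, smul_assoc]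
  · intro g hg
    rw [φ.map_eq_zero_of_not_injective (v ∘ g) fun h => hg h.of_comp, smul_zero]

section Blocks

variable {n : ℕ}

/-- The index set `Fin (2 * n)` as `n` consecutive blocks of length two: `(i, 0)` and `(i, 1)`
correspond to `2 * i` and `2 * i + 1`. -/
def blockEquiv (n : ℕ) : Fin n × Fin 2 ≃ Fin (2 * n) :=
  finProdFinEquiv.trans (finCongr (Nat.mul_comm n 2))

theorem blockEquiv_zero (i : Fin n) : blockEquiv n (i, 0) = evenIdx i := by
  ext; simp [blockEquiv, evenIdx]

theorem blockEquiv_one (i : Fin n) : blockEquiv n (i, 1) = oddIdx i := by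
  ext; simp [blockEquiv, oddIdx, Nat.add_comm]

theorem evenIdx_injective : Function.Injective (evenIdx (n := n)) := fun i j h => by
  simpa [evenIdx, Fin.ext_iff] using h

/-- The permutation of `Fin (2 * n)` that permutes the blocks `{2 * i, 2 * i + 1}` by `τ`; these
are the symmetries of a listing of the pairs of a perfect matching. -/
def blockPerm (τ : Equiv.Perm (Fin n)) : Equiv.Perm (Fin (2 * n)) :=
  (blockEquiv n).permCongr (Equiv.prodCongrLeft fun _ : Fin 2 => τ)

theorem blockPerm_evenIdx (τ : Equiv.Perm (Fin n)) (i : Fin n) :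
    blockPerm τ (evenIdx i) = evenIdx (τ i) := by
  simp [blockPerm, ← blockEquiv_zero]

theorem blockPerm_oddIdx (τ : Equiv.Perm (Fin n)) (i : Fin n) :
    blockPerm τ (oddIdx i) = oddIdx (τ i) := by
  simp [blockPerm, ← blockEquiv_one]

theorem sign_blockPerm (τ : Equiv.Perm (Fin n)) : Equiv.Perm.sign (blockPerm τ) = 1 := by
  rw [blockPerm, Equiv.Perm.sign_permCongr, Equiv.Perm.sign_prodCongrLeft, Fin.prod_univ_two,
    Int.units_mul_self]

/-- Tuples of length `2 * n` as `n`-tuples of pairs of consecutive entries. -/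
def tuplePairEquiv (n : ℕ) (α : Type*) : (Fin (2 * n) → α) ≃ (Fin n → α × α) :=
  ((Equiv.arrowCongr (blockEquiv n).symm (Equiv.refl α)).trans
    (Equiv.curry (Fin n) (Fin 2) α)).trans
      (Equiv.arrowCongr (Equiv.refl (Fin n)) (finTwoArrowEquiv α))

theorem tuplePairEquiv_apply {α : Type*} (g : Fin (2 * n) → α) (t : Fin n) :
    tuplePairEquiv n α g t = (g (evenIdx t), g (oddIdx t)) := by
  simp [tuplePairEquiv, finTwoArrowEquiv, ← blockEquiv_zero, ← blockEquiv_one]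

theorem prod_ofFn_evenIdx_mul_oddIdx {M : Type*} [Monoid M] (x : Fin (2 * n) → M) :
    (List.ofFn fun t : Fin n => x (evenIdx t) * x (oddIdx t)).prod = (List.ofFn x).prod := by
  rw [List.ofFn_mul', List.prod_flatten, List.map_ofFn]
  congr 2
  ext t
  simp [List.ofFn_succ, evenIdx, oddIdx]

end Blocks

theorem sum_smul_mul_pow {R A κ : Type*} [CommSemiring R] [Semiring A] [Algebra R A] [Fintype κ]
    (D : Matrix κ κ R) (x : κ → A) (n : ℕ) :
    (∑ i, ∑ j, D i j • (x i * x j)) ^ n =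
      ∑ g : Fin (2 * n) → κ, (∏ t, D (g (evenIdx t)) (g (oddIdx t))) •
        (List.ofFn fun t => x (g t)).prod := by
  classical
  have hpairs : (∑ p : κ × κ, D p.1 p.2 • (x p.1 * x p.2)) ^ n =
      ∑ p : Fin n → κ × κ, (∏ t, D (p t).1 (p t).2) •
        (List.ofFn fun t => x (p t).1 * x (p t).2).prod := by
    rw [← MultilinearMap.mkPiAlgebraFin_apply_const (R := R), MultilinearMap.map_sum]
    simp only [MultilinearMap.map_smul_univ, MultilinearMap.mkPiAlgebraFin_apply]
  rw [← Fintype.sum_prod_type' fun i j => D i j • (x i * x j), hpairs,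
    ← (tuplePairEquiv n κ).sum_comp]
  refine Finset.sum_congr rfl fun g _ => ?_
  simp only [tuplePairEquiv_apply]
  rw [prod_ofFn_evenIdx_mul_oddIdx fun t => x (g t)]

section Pfaffian

variable {R : Type*} [CommRing R]

/-- The part of a matrix strictly above the diagonal, extended by zero. Summing over its entries
encodes the condition `i < j`, both in a 2-form and in the Pfaffian. -/
def strictUpper {κ : Type*} [LinearOrder κ] (A : Matrix κ κ R) : Matrix κ κ R :=
  Matrix.of fun i j => if i < j then A i j else 0

theorem strictUpper_submatrix {κ l : Type*} [LinearOrder κ] [LinearOrder l] (A : Matrix κ κ R)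
    {f : l → κ} (hf : StrictMono f) :
    strictUpper (A.submatrix f f) = (strictUpper A).submatrix f f := by
  ext i j
  simp only [strictUpper, Matrix.of_apply, Matrix.submatrix_apply, hf.lt_iff_lt]

variable {n : ℕ}

open scoped Classical in
theorem pfaffian_eq_sum_strictUpper (A : Matrix (Fin (2 * n)) (Fin (2 * n)) R) :
    pfaffian A =
      ∑ σ ∈ Finset.univ.filter fun σ : Equiv.Perm (Fin (2 * n)) => StrictMono (σ ∘ evenIdx),
        Equiv.Perm.sign σ • ∏ i : Fin n, strictUpper A (σ (evenIdx i)) (σ (oddIdx i)) := by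
  simp only [pfaffian, Finset.sum_filter, strictUpper, Matrix.of_apply, Finset.prod_ite_zero,
    Finset.mem_univ, true_imp_iff, smul_ite, smul_zero, ← ite_and]
  exact Finset.sum_congr rfl fun σ _ => if_congr and_comm rfl rfl

theorem sum_perm_sign_smul_prod_strictUpper (A : Matrix (Fin (2 * n)) (Fin (2 * n)) R) :
    ∑ σ : Equiv.Perm (Fin (2 * n)),
      Equiv.Perm.sign σ • ∏ i : Fin n, strictUpper A (σ (evenIdx i)) (σ (oddIdx i)) =
      (n.factorial : R) * pfaffian A := by
  classical
  set F : Equiv.Perm (Fin (2 * n)) → R := fun σ =>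
    Equiv.Perm.sign σ • ∏ i : Fin n, strictUpper A (σ (evenIdx i)) (σ (oddIdx i)) with hF
  have hinv (τ : Equiv.Perm (Fin n)) (σ : Equiv.Perm (Fin (2 * n))) :
      F (σ * blockPerm τ) = F σ := by
    simp only [hF, Equiv.Perm.mul_apply, blockPerm_evenIdx, blockPerm_oddIdx,
      Equiv.Perm.sign_mul, sign_blockPerm, mul_one]
    rw [Equiv.prod_comp τ fun i => strictUpper A (σ (evenIdx i)) (σ (oddIdx i))]
  have heven (τ : Equiv.Perm (Fin n)) (σ : Equiv.Perm (Fin (2 * n))) :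
      (σ * blockPerm τ) ∘ evenIdx = (σ ∘ evenIdx) ∘ τ :=
    funext fun i => congrArg σ (blockPerm_evenIdx τ i)
  set S : Finset (Equiv.Perm (Fin (2 * n))) :=
    Finset.univ.filter fun σ => StrictMono (σ ∘ evenIdx)
  have hpf : pfaffian A = ∑ σ ∈ S, F σ := pfaffian_eq_sum_strictUpper A
  calc ∑ σ, F σ
      = ∑ σ ∈ S, ∑ τ : Equiv.Perm (Fin n), F (σ * blockPerm τ) :=
        sum_eq_sum_strictMono_sum_perm (fun σ : Equiv.Perm (Fin (2 * n)) => σ ∘ evenIdx)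
          (fun τ => Equiv.mulRight (blockPerm τ)) heven F
          fun σ hσ => absurd (σ.injective.comp evenIdx_injective) hσ
    _ = ∑ σ ∈ S, n.factorial • F σ := by
        simp only [hinv, Finset.sum_const, Finset.card_univ, Fintype.card_perm, Fintype.card_fin]
    _ = (n.factorial : R) * pfaffian A := by
        rw [← Finset.smul_sum, ← hpf, nsmul_eq_mul]

end Pfaffian

open scoped Classical in
theorem stmt16_general {R M κ : Type*} [CommRing R] [AddCommGroup M] [Module R M] [Fintype κ]
    [LinearOrder κ] (k : ℕ) (C : Matrix κ κ R) (v : κ → M) :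
    (∑ i, ∑ j with i < j, C i j • (ExteriorAlgebra.ι R (v i) * ExteriorAlgebra.ι R (v j))) ^ k =
      (k.factorial : R) • ∑ f : Fin (2 * k) → κ with StrictMono f,
        pfaffian (C.submatrix f f) • ExteriorAlgebra.ιMulti R (2 * k) (v ∘ f) := by
  set ω : κ → ExteriorAlgebra R M := fun i => ExteriorAlgebra.ι R (v i)
  have hform : ∑ i, ∑ j with i < j, C i j • (ω i * ω j) =
      ∑ i, ∑ j, strictUpper C i j • (ω i * ω j) := by
    simp only [strictUpper, Matrix.of_apply, ite_smul, zero_smul, Finset.sum_filter]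
  have hcoeff (f : Fin (2 * k) → κ) (hf : StrictMono f) :
      ∑ σ : Equiv.Perm (Fin (2 * k)), Equiv.Perm.sign σ •
        ∏ t, strictUpper C ((f ∘ σ) (evenIdx t)) ((f ∘ σ) (oddIdx t)) =
      k.factorial * pfaffian (C.submatrix f f) := by
    rw [← sum_perm_sign_smul_prod_strictUpper, strictUpper_submatrix C hf]
    rfl
  rw [hform, sum_smul_mul_pow, Finset.smul_sum]
  refine (sum_smul_alternatingMap_comp (ExteriorAlgebra.ιMulti R (2 * k)) v fun g =>
    ∏ t, strictUpper C (g (evenIdx t)) (g (oddIdx t))).trans ?_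
  refine Finset.sum_congr rfl fun f hf => ?_
  rw [hcoeff f (Finset.mem_filter.1 hf).2, mul_smul]

open scoped Classical in
/-- For a 2-form `Ω = Σ_{i<j} c_{ij} ωᵢ∧ωⱼ` on `K^m` with skew coefficient matrix `C`, the
`k`-fold wedge power is
`Ω^k = k!·Σ_{i₁<⋯<i_{2k}} Pf(C(i₁,…,i_{2k}))·ω_{i₁}∧⋯∧ω_{i_{2k}}`,
the sum being over principal `2k × 2k` submatrices of `C`. -/
theorem stmt16 {K : Type*} [Field K] [CharZero K] (m k : ℕ)
    (C : Matrix (Fin m) (Fin m) K) (hC : Cᵀ = -C)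
    (Ω : ExteriorAlgebra K (Fin m → K))
    (hΩ : Ω = ∑ i : Fin m, ∑ j ∈ Finset.univ.filter (fun j => i < j),
        C i j • (ExteriorAlgebra.ι K (Pi.single i (1 : K)) *
                 ExteriorAlgebra.ι K (Pi.single j (1 : K)))) :
    Ω ^ k = (k.factorial : K) •
      ∑ f ∈ Finset.univ.filter (fun f : Fin (2 * k) → Fin m => StrictMono f),
        pfaffian (C.submatrix f f) •
          (List.ofFn fun t : Fin (2 * k) =>
            ExteriorAlgebra.ι K (Pi.single (f t) (1 : K))).prod := by
  rw [hΩ]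
  exact stmt16_general k C fun i => Pi.single i 1
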